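/- arXiv:2306.09262 — 4 statements merged into one kernel-verified Lean document; each statement's English description precedes it below -/
import Mathlib

section
/- Let 0 < ρ₁ < 1 and 0 < ρ₂ < 1, and let c₁, c₂ > 0, σ₁, σ₂ > 0, ν₁, ν₂ ∈ ℝ. Let X and Y be independent nonnegative real random variables having Lebesgue densities p and q such that p(x) ~ c₁ x^{ν₁} e^{−σ₁ x^{ρ₁}} and q(x) ~ c₂ x^{ν₂} e^{−σ₂ x^{ρ₂}} as x → ∞. Then the tail of the sum satisfies P(X + Y > x) ~ P(X > x) + P(Y > x) as x → ∞. -/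
open MeasureTheory Filter Real
open scoped ProbabilityTheory

/-!
Write `g x = x ^ ν * exp (-σ * x ^ ρ)` for the heavier of the two density profiles (`ggaShape`). By
`ggaShape_dominated` one of the profiles eventually dominates the other, and the claim is symmetric
in `X` and `Y`, so let this be the profile of `X`.

The lower bound is inclusion-exclusion, `P(X + Y > x) ≥ P(X > x) + P(Y > x) - P(X > x) P(Y > x)`.
For the upper bound fix a level `h`. A sum above `x` forces `X > x - h`, or `Y > x - h`, or both
`X > h` and `Y > h`. Bounded shifts do not matter asymptotically (`tail_sub_le`), so the first two
events contribute `P(X > x) + P(Y > x)` up to a factor `1 + ε`.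

The third event is controlled by one inequality, `exists_ggaShape_mul_le`: for large `u`, `v`,
`g u * g v ≤ K * g (u + v) * (u ^ (-2) + v ^ (-2))`. It rests on `(a + b) ^ ρ ≤ a ^ ρ + ρ * b ^ ρ`
for `b ≤ a` (Bernoulli), which leaves the factor `exp (-σ * (1 - ρ) * b ^ ρ)` to spare. Integrating it
over `u, v > h`, `u + v > x` with Tonelli and translation invariance gives a bound `O(1 / h)` times
`∫_x^∞ g`, that is, times `P(X > x)`, uniformly in `x`. Taking `h` large finishes the proof.
-/

/-! ### The density profile -/

/-- The unnormalised profile `x ^ ν * exp (-σ * x ^ ρ)` of a generalized Gamma density. It is only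
meaningful for `x > 0`; every estimate is restricted to large arguments. -/
noncomputable def ggaShape (ν σ ρ x : ℝ) : ℝ := x ^ ν * exp (-σ * x ^ ρ)

lemma ggaShape_pos (ν σ ρ : ℝ) {x : ℝ} (hx : 0 < x) : 0 < ggaShape ν σ ρ x :=
  mul_pos (rpow_pos_of_pos hx _) (exp_pos _)

lemma measurable_ggaShape (ν σ ρ : ℝ) : Measurable (ggaShape ν σ ρ) := by
  unfold ggaShape; fun_prop

lemma add_rpow_le {ρ a b : ℝ} (hρ : 0 < ρ) (hρ' : ρ < 1) (ha : 0 < a) (hb : 0 ≤ b) :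
    (a + b) ^ ρ ≤ a ^ ρ + ρ * (a ^ (ρ - 1) * b) := by
  have h := rpow_one_add_le_one_add_mul_self (s := b / a) (p := ρ)
    (by have : 0 ≤ b / a := by positivity
        linarith) hρ.le hρ'.le
  have e : a + b = a * (1 + b / a) := by field_simp
  rw [e, mul_rpow ha.le (by positivity), rpow_sub_one ha.ne']
  calc a ^ ρ * (1 + b / a) ^ ρ ≤ a ^ ρ * (1 + ρ * (b / a)) := by gcongr
    _ = _ := by ring

/-- Quantitative subadditivity of `t ↦ t ^ ρ`: adding the smaller number `b` costs only the fraction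
`ρ < 1` of `b ^ ρ`. The spared `(1 - ρ) * b ^ ρ` makes the convolution estimate converge. -/
lemma add_rpow_le_of_le {ρ a b : ℝ} (hρ : 0 < ρ) (hρ' : ρ < 1) (hb : 0 < b) (hab : b ≤ a) :
    (a + b) ^ ρ ≤ a ^ ρ + ρ * b ^ ρ := by
  refine (add_rpow_le hρ hρ' (hb.trans_le hab) hb.le).trans ?_
  have : a ^ (ρ - 1) ≤ b ^ (ρ - 1) := rpow_le_rpow_of_nonpos hb hab (by linarith)
  have e : b ^ ρ = b ^ (ρ - 1) * b := by rw [rpow_sub_one hb.ne']; field_simp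
  rw [e]
  gcongr

lemma tendsto_rpow_mul_exp_neg (a : ℝ) {b ρ : ℝ} (hb : 0 < b) (hρ : 0 < ρ) :
    Tendsto (fun x : ℝ => x ^ a * exp (-b * x ^ ρ)) atTop (nhds 0) := by
  have h := (tendsto_rpow_mul_exp_neg_mul_atTop_nhds_zero (a / ρ) b hb).comp
    (tendsto_rpow_atTop hρ)
  refine h.congr' ?_
  filter_upwards [eventually_gt_atTop 0] with x hx
  simp only [Function.comp]
  rw [← rpow_mul hx.le, mul_div_cancel₀ _ hρ.ne']

lemma rpow_le_two_rpow_mul (ν : ℝ) {u s : ℝ} (hu : 0 < u) (h1 : u ≤ s) (h2 : s ≤ 2 * u) :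
    u ^ ν ≤ 2 ^ |ν| * s ^ ν := by
  rcases le_total 0 ν with h | h
  · rw [abs_of_nonneg h]
    have : u ^ ν ≤ s ^ ν := rpow_le_rpow hu.le h1 h
    have h3 : (1:ℝ) ≤ 2 ^ ν := one_le_rpow (by norm_num) h
    have : 0 ≤ s ^ ν := rpow_nonneg (by linarith) _
    nlinarith
  · rw [abs_of_nonpos h]
    have : (2 * u) ^ ν ≤ s ^ ν := rpow_le_rpow_of_nonpos (by linarith) h2 h
    rw [mul_rpow (by norm_num) hu.le] at this
    calc u ^ ν = 2 ^ (-ν) * (2 ^ ν * u ^ ν) := by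
          rw [← mul_assoc, ← rpow_add (by norm_num)]; simp
      _ ≤ _ := by gcongr

/-- The pointwise form of subexponentiality. The weights `u ^ (-2)`, `v ^ (-2)` are integrable at
infinity and stand in for the smaller quantity `m ^ ν * exp (-σ * (1 - ρ) * m ^ ρ)`, `m = min u v`. -/
lemma exists_ggaShape_mul_le (ν : ℝ) {σ ρ : ℝ} (hσ : 0 < σ) (hρ : 0 < ρ) (hρ' : ρ < 1) :
    ∃ h₀ : ℝ, 0 < h₀ ∧ ∀ u v, h₀ ≤ u → h₀ ≤ v → ggaShape ν σ ρ u * ggaShape ν σ ρ v ≤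
      2 ^ |ν| * ggaShape ν σ ρ (u + v) * (u ^ (-2 : ℝ) + v ^ (-2 : ℝ)) := by
  have hb : 0 < σ * (1 - ρ) := mul_pos hσ (by linarith)
  have ht := (tendsto_rpow_mul_exp_neg (ν + 2) hb hρ).eventually (gt_mem_nhds one_pos)
  obtain ⟨h₁, hh₁⟩ := eventually_atTop.1 ht
  refine ⟨max h₁ 1, by positivity, ?_⟩
  have key : ∀ u v, max h₁ 1 ≤ v → v ≤ u → ggaShape ν σ ρ u * ggaShape ν σ ρ v ≤
      2 ^ |ν| * ggaShape ν σ ρ (u + v) * v ^ (-2 : ℝ) := by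
    intro u v hv huv
    have hv0 : 0 < v := by linarith [le_max_right h₁ 1]
    have hu0 : 0 < u := by linarith
    have h1 := hh₁ v ((le_max_left _ _).trans hv)
    have h2 : v ^ ν * exp (-(σ * (1 - ρ)) * v ^ ρ) ≤ v ^ (-2 : ℝ) := by
      have e : v ^ ν = v ^ (ν + 2) * v ^ (-2 : ℝ) := by rw [← rpow_add hv0]; ring_nf
      rw [e]
      have : 0 < v ^ (-2 : ℝ) := by positivity
      nlinarith
    have h3 : exp (-σ * u ^ ρ) * exp (-σ * v ^ ρ) ≤
        exp (-σ * (u + v) ^ ρ) * exp (-(σ * (1 - ρ)) * v ^ ρ) := by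
      rw [← exp_add, ← exp_add, exp_le_exp]
      have := add_rpow_le_of_le hρ hρ' hv0 huv
      nlinarith
    have h4 := rpow_le_two_rpow_mul ν hu0 (by linarith : u ≤ u + v) (by linarith)
    unfold ggaShape
    calc u ^ ν * exp (-σ * u ^ ρ) * (v ^ ν * exp (-σ * v ^ ρ))
        = u ^ ν * v ^ ν * (exp (-σ * u ^ ρ) * exp (-σ * v ^ ρ)) := by ring
      _ ≤ (2 ^ |ν| * (u + v) ^ ν) * v ^ ν *
          (exp (-σ * (u + v) ^ ρ) * exp (-(σ * (1 - ρ)) * v ^ ρ)) := by gcongr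
      _ = 2 ^ |ν| * ((u + v) ^ ν * exp (-σ * (u + v) ^ ρ)) *
          (v ^ ν * exp (-(σ * (1 - ρ)) * v ^ ρ)) := by ring
      _ ≤ _ := by gcongr
  intro u v hu hv
  have hu0 : 0 < u := by linarith [le_max_right h₁ 1]
  have hv0 : 0 < v := by linarith [le_max_right h₁ 1]
  have hs := (ggaShape_pos ν σ ρ (add_pos hu0 hv0)).le
  rcases le_total v u with h | h
  · refine (key u v hv h).trans ?_
    gcongr
    linarith [rpow_nonneg hu0.le (-2 : ℝ)]
  · rw [mul_comm, add_comm u v] at *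
    refine (key v u hu h).trans ?_
    gcongr
    linarith [rpow_nonneg hv0.le (-2 : ℝ)]

lemma tendsto_ggaShape_sub_div (ν σ : ℝ) {ρ : ℝ} (hρ : 0 < ρ) (hρ' : ρ < 1) {h : ℝ}
    (hh : 0 ≤ h) :
    Tendsto (fun x => ggaShape ν σ ρ (x - h) / ggaShape ν σ ρ x) atTop (nhds 1) := by
  have hsub : Tendsto (fun x : ℝ => x - h) atTop atTop := tendsto_atTop_add_const_right _ _ tendsto_id
  have t1 : Tendsto (fun x : ℝ => ((x - h) / x) ^ ν) atTop (nhds 1) := by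
    have : Tendsto (fun x : ℝ => (x - h) / x) atTop (nhds 1) := by
      have h0 : Tendsto (fun x : ℝ => 1 - h / x) atTop (nhds (1 - 0)) :=
        tendsto_const_nhds.sub (tendsto_const_nhds.div_atTop tendsto_id)
      rw [sub_zero] at h0
      refine h0.congr' ?_
      filter_upwards [eventually_gt_atTop 0] with x hx
      field_simp
    simpa using this.rpow_const (p := ν) (Or.inl one_ne_zero)
  have t2 : Tendsto (fun x : ℝ => x ^ ρ - (x - h) ^ ρ) atTop (nhds 0) := by
    have up : Tendsto (fun x : ℝ => ρ * ((x - h) ^ (ρ - 1) * h)) atTop (nhds 0) := by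
      have := (tendsto_rpow_neg_atTop (y := 1 - ρ) (by linarith)).comp hsub
      have := (this.mul_const h).const_mul ρ
      simpa [Function.comp_def] using this
    refine tendsto_of_tendsto_of_tendsto_of_le_of_le' tendsto_const_nhds up ?_ ?_
    · filter_upwards [eventually_gt_atTop h] with x hx
      have := rpow_le_rpow (by linarith : 0 ≤ x - h) (by linarith : x - h ≤ x) hρ.le
      linarith
    · filter_upwards [eventually_gt_atTop h] with x hx
      have := add_rpow_le hρ hρ' (by linarith : 0 < x - h) hh
      rw [sub_add_cancel] at this
      linarith
  have t3 : Tendsto (fun x : ℝ => exp (σ * (x ^ ρ - (x - h) ^ ρ))) atTop (nhds 1) := by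
    have := (continuous_exp.tendsto _).comp (t2.const_mul σ)
    simpa [Function.comp_def] using this
  have := t1.mul t3
  rw [mul_one] at this
  refine this.congr' ?_
  filter_upwards [eventually_gt_atTop h] with x hx
  have hx0 : 0 < x := by linarith
  unfold ggaShape
  rw [div_rpow (by linarith) hx0.le, mul_div_mul_comm, ← exp_sub]
  ring_nf

/-- The profiles are totally preordered by eventual domination, lexicographically in the parameters. -/
lemma ggaShape_dominated (ν₁ ν₂ : ℝ) {σ₁ σ₂ ρ₁ ρ₂ : ℝ} (hρ₂ : 0 < ρ₂) (hσ₂ : 0 < σ₂)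
    (h : ρ₁ < ρ₂ ∨ (ρ₁ = ρ₂ ∧ (σ₁ < σ₂ ∨ (σ₁ = σ₂ ∧ ν₂ ≤ ν₁)))) :
    ∀ᶠ x in atTop, ggaShape ν₂ σ₂ ρ₂ x ≤ ggaShape ν₁ σ₁ ρ₁ x := by
  have aux : ∀ b, 0 < b → (∀ᶠ x : ℝ in atTop, σ₁ * x ^ ρ₁ + b * x ^ ρ₂ ≤ σ₂ * x ^ ρ₂) →
      ∀ᶠ x in atTop, ggaShape ν₂ σ₂ ρ₂ x ≤ ggaShape ν₁ σ₁ ρ₁ x := by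
    intro b hb he
    filter_upwards [he, eventually_gt_atTop 0,
      (tendsto_rpow_mul_exp_neg (ν₂ - ν₁) hb hρ₂).eventually (gt_mem_nhds one_pos)]
      with x hx hx0 h1
    unfold ggaShape
    calc x ^ ν₂ * exp (-σ₂ * x ^ ρ₂)
        ≤ x ^ ν₂ * (exp (-σ₁ * x ^ ρ₁) * exp (-b * x ^ ρ₂)) := by
          rw [← exp_add]; gcongr; linarith
      _ = x ^ ν₁ * exp (-σ₁ * x ^ ρ₁) * (x ^ (ν₂ - ν₁) * exp (-b * x ^ ρ₂)) := by
          have e : x ^ ν₂ = x ^ ν₁ * x ^ (ν₂ - ν₁) := by rw [← rpow_add hx0]; ring_nf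
          rw [e]; ring
      _ ≤ x ^ ν₁ * exp (-σ₁ * x ^ ρ₁) * 1 := by gcongr
      _ = _ := mul_one _
  rcases h with h | ⟨rfl, h | ⟨rfl, h⟩⟩
  · refine aux (σ₂ / 2) (by positivity) ?_
    filter_upwards [(tendsto_rpow_atTop (sub_pos.2 h)).eventually_ge_atTop (2 * σ₁ / σ₂),
      eventually_gt_atTop 0] with x hx hx0
    have e : x ^ ρ₂ = x ^ ρ₁ * x ^ (ρ₂ - ρ₁) := by rw [← rpow_add hx0]; ring_nf
    rw [div_le_iff₀ hσ₂] at hx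
    have : 0 < x ^ ρ₁ := by positivity
    rw [e]
    nlinarith
  · exact aux (σ₂ - σ₁) (by linarith) (Eventually.of_forall fun x => by linarith)
  · filter_upwards [eventually_ge_atTop 1] with x hx
    unfold ggaShape
    gcongr

/-! ### Estimates for measures with dominated densities -/

lemma lintegral_mul_comp_add (φ ψ : ℝ → ENNReal) (hφ : Measurable φ) (hψ : Measurable ψ) :
    ∫⁻ u, ∫⁻ v, φ u * ψ (u + v) = (∫⁻ u, φ u) * ∫⁻ s, ψ s := by
  rw [← lintegral_mul_const _ hφ]
  refine lintegral_congr fun u => ?_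
  rw [lintegral_const_mul _ (by fun_prop), lintegral_add_left_eq_self ψ u]

/-- If both densities are dominated by multiples of `g` beyond `h` and `g` satisfies the pointwise
subexponential bound there, then a large sum with both summands above `h` has probability at most
`O(1 / h)` times the tail of `g`. -/
lemma prod_le_of_density_le {μ η : Measure ℝ} [SFinite μ] [SFinite η] {g : ℝ → ℝ}
    (hg : Measurable g) {A B K h x : ℝ} (hA : 0 ≤ A) (hB : 0 ≤ B) (hK : 0 ≤ K) (hh : 0 < h)
    (hgn : ∀ u, h < u → 0 ≤ g u)
    (hμ : μ.restrict (Set.Ioi h) ≤ volume.withDensity (fun u => ENNReal.ofReal (A * g u)))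
    (hη : η.restrict (Set.Ioi h) ≤ volume.withDensity (fun u => ENNReal.ofReal (B * g u)))
    (hmul : ∀ u v, h < u → h < v →
      g u * g v ≤ K * g (u + v) * (u ^ (-2 : ℝ) + v ^ (-2 : ℝ))) :
    μ.prod η {z | h < z.1 ∧ h < z.2 ∧ x < z.1 + z.2} ≤
      ENNReal.ofReal (2 * (A * B * K) / h) * ∫⁻ s in Set.Ioi x, ENNReal.ofReal (g s) := by
  set S : Set (ℝ × ℝ) := {z | h < z.1 ∧ h < z.2 ∧ x < z.1 + z.2} with hS
  have hSm : MeasurableSet S := by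
    exact (measurableSet_lt measurable_const measurable_fst).inter
      ((measurableSet_lt measurable_const measurable_snd).inter
        (measurableSet_lt measurable_const (measurable_fst.add measurable_snd)))
  have hDn : 0 ≤ A * B * K := by positivity
  let φ : ℝ → ENNReal := (Set.Ioi h).indicator fun u => ENNReal.ofReal (A * B * K * u ^ (-2 : ℝ))
  let ψ : ℝ → ENNReal := (Set.Ioi x).indicator fun s => ENNReal.ofReal (g s)
  have hφm : Measurable φ := Measurable.indicator (by fun_prop) measurableSet_Ioi
  have hψm : Measurable ψ := Measurable.indicator (by fun_prop) measurableSet_Ioi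
  have hφi : ∫⁻ u, φ u = ENNReal.ofReal (A * B * K / h) := by
    rw [lintegral_indicator measurableSet_Ioi, ← ofReal_integral_eq_lintegral_ofReal,
      integral_const_mul, integral_Ioi_rpow_of_lt (by norm_num) hh]
    · congr 1
      norm_num
      rw [rpow_neg_one, div_eq_mul_inv]
    · exact (integrableOn_Ioi_rpow_of_lt (by norm_num) hh).const_mul _
    · filter_upwards [ae_restrict_mem measurableSet_Ioi] with u hu
      have : 0 < u := hh.trans hu
      positivity
  have hψi : ∫⁻ s, ψ s = ∫⁻ s in Set.Ioi x, ENNReal.ofReal (g s) :=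
    lintegral_indicator measurableSet_Ioi _
  have e1 : μ.prod η S = (μ.restrict (Set.Ioi h)).prod (η.restrict (Set.Ioi h)) S := by
    rw [Measure.prod_restrict, Measure.restrict_apply hSm]
    congr 1
    ext z
    simp only [hS, Set.mem_inter_iff, Set.mem_prod, Set.mem_Ioi, Set.mem_ofPred_eq]
    tauto
  have e2 := Measure.prod_mono hμ hη S
  rw [← e1, prod_withDensity (by fun_prop) (by fun_prop), withDensity_apply _ hSm,
    ← lintegral_indicator hSm] at e2
  refine e2.trans ?_
  calc ∫⁻ z, S.indicator
        (fun z => ENNReal.ofReal (A * g z.1) * ENNReal.ofReal (B * g z.2)) z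
          ∂((volume : Measure ℝ).prod volume)
      ≤ ∫⁻ z, (φ z.1 * ψ (z.1 + z.2) + φ z.2 * ψ (z.1 + z.2))
          ∂((volume : Measure ℝ).prod volume) := by
        refine lintegral_mono fun z => ?_
        by_cases hz : z ∈ S
        · obtain ⟨h1, h2, h3⟩ := hz
          have hz1 : 0 < z.1 := hh.trans h1
          have hz2 : 0 < z.2 := hh.trans h2
          have n1 := hgn _ h1
          have n2 := hgn _ h2
          have n3 := hgn (z.1 + z.2) (by linarith)
          rw [Set.indicator_of_mem (show z ∈ S from ⟨h1, h2, h3⟩)]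
          simp only [φ, ψ]
          rw [Set.indicator_of_mem (show z.1 ∈ Set.Ioi h from h1),
            Set.indicator_of_mem (show z.2 ∈ Set.Ioi h from h2),
            Set.indicator_of_mem (show z.1 + z.2 ∈ Set.Ioi x from h3),
            ← ENNReal.ofReal_mul (by positivity), ← ENNReal.ofReal_mul (by positivity),
            ← ENNReal.ofReal_mul (by positivity), ← ENNReal.ofReal_add (by positivity)
            (by positivity)]
          refine ENNReal.ofReal_le_ofReal ?_
          have := mul_le_mul_of_nonneg_left (hmul _ _ h1 h2) (mul_nonneg hA hB)
          linarith
        · rw [Set.indicator_of_notMem hz]; exact zero_le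
    _ = (∫⁻ u, φ u) * (∫⁻ s, ψ s) + (∫⁻ u, φ u) * ∫⁻ s, ψ s := by
        rw [lintegral_add_left (by fun_prop), lintegral_prod _ (by fun_prop),
          lintegral_prod_symm _ (by fun_prop)]
        congr 1
        · exact lintegral_mul_comp_add φ ψ hφm hψm
        · rw [← lintegral_mul_comp_add φ ψ hφm hψm]
          simp only [add_comm]
    _ = _ := by
        rw [hφi, hψi, ← two_mul, ← mul_assoc, mul_div_assoc 2, ENNReal.ofReal_mul zero_le_two,
          ENNReal.ofReal_ofNat]

/-- The law is long-tailed: a bounded shift does not change the tail asymptotically. Comparing the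
densities at `y - h` and `y` suffices, by translation invariance of Lebesgue measure. -/
lemma tail_sub_le {μ : Measure ℝ} {p : ℝ → ℝ}
    (hμ : μ = (volume : Measure ℝ).withDensity (fun x => ENNReal.ofReal (p x)))
    {c ν σ ρ : ℝ} (hc : 0 < c) (hρ : 0 < ρ) (hρ' : ρ < 1)
    (hp : Tendsto (fun x => p x / (c * ggaShape ν σ ρ x)) atTop (nhds 1))
    {h ε : ℝ} (hh : 0 ≤ h) (hε : 0 < ε) :
    ∀ᶠ x in atTop, μ (Set.Ioi (x - h)) ≤ ENNReal.ofReal (1 + ε) * μ (Set.Ioi x) := by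
  have hsub : Tendsto (fun x : ℝ => x - h) atTop atTop :=
    tendsto_atTop_add_const_right _ _ tendsto_id
  have t := ((hp.comp hsub).mul (tendsto_ggaShape_sub_div ν σ hρ hρ' hh)).div hp one_ne_zero
  simp only [mul_one, div_one] at t
  have e : ∀ᶠ y in atTop, p (y - h) ≤ (1 + ε) * p y := by
    filter_upwards [t.eventually (gt_mem_nhds (by linarith : (1:ℝ) < 1 + ε)),
      hp.eventually (lt_mem_nhds one_pos), eventually_gt_atTop h] with y hy hpy hy0
    have g1 := ggaShape_pos ν σ ρ (by linarith : 0 < y - h)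
    have g2 := ggaShape_pos ν σ ρ (by linarith : 0 < y)
    have hp0 : 0 < p y := by
      rwa [div_pos_iff_of_pos_right (by positivity)] at hpy
    have e : p (y - h) / p y < 1 + ε := by
      have e' : p (y - h) / p y = p (y - h) / (c * ggaShape ν σ ρ (y - h)) *
          (ggaShape ν σ ρ (y - h) / ggaShape ν σ ρ y) / (p y / (c * ggaShape ν σ ρ y)) := by
        field_simp
      rw [e']
      exact hy
    exact ((div_lt_iff₀ hp0).1 e).le
  obtain ⟨x₀, hx₀⟩ := eventually_atTop.1 e
  filter_upwards [eventually_ge_atTop x₀] with x hx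
  rw [hμ, withDensity_apply _ measurableSet_Ioi, withDensity_apply _ measurableSet_Ioi,
    ← lintegral_const_mul' _ _ ENNReal.ofReal_ne_top, ← lintegral_indicator measurableSet_Ioi,
    ← lintegral_indicator measurableSet_Ioi, ← lintegral_sub_right_eq_self _ h]
  refine lintegral_mono fun y => ?_
  by_cases hy : x < y
  · rw [Set.indicator_of_mem (show y - h ∈ Set.Ioi (x - h) by simpa using hy),
      Set.indicator_of_mem (show y ∈ Set.Ioi x from hy), ← ENNReal.ofReal_mul (by linarith)]
    exact ENNReal.ofReal_le_ofReal (hx₀ y (hx.trans hy.le))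
  · rw [Set.indicator_of_notMem (by simpa using hy)]; exact zero_le

lemma restrict_le_of_eventually_le {p r : ℝ → ℝ} {h : ℝ} (hpr : ∀ x, h < x → p x ≤ r x) :
    ((volume : Measure ℝ).withDensity (fun x => ENNReal.ofReal (p x))).restrict (Set.Ioi h) ≤
      (volume : Measure ℝ).withDensity (fun x => ENNReal.ofReal (r x)) := by
  refine Measure.le_iff.2 fun s hs => ?_
  rw [Measure.restrict_apply hs, withDensity_apply _ (hs.inter measurableSet_Ioi),
    withDensity_apply _ hs]
  calc _ ≤ ∫⁻ x in s ∩ Set.Ioi h, ENNReal.ofReal (r x) :=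
        setLIntegral_mono' (hs.inter measurableSet_Ioi) fun x hx =>
          ENNReal.ofReal_le_ofReal (hpr x hx.2)
    _ ≤ _ := lintegral_mono_set Set.inter_subset_left

/-! ### Tails of laws with generalized Gamma asymptotics -/

lemma shape_tail_le {p : ℝ → ℝ} {c ν σ ρ : ℝ} (hc : 0 < c)
    (hp : Tendsto (fun x => p x / (c * ggaShape ν σ ρ x)) atTop (nhds 1)) :
    ∀ᶠ x in atTop, 0 < ggaShape ν σ ρ x ∧ c / 2 * ggaShape ν σ ρ x ≤ p x ∧
      p x ≤ 2 * c * ggaShape ν σ ρ x := by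
  filter_upwards [hp.eventually (lt_mem_nhds (by norm_num : (1 / 2 : ℝ) < 1)),
    hp.eventually (gt_mem_nhds one_lt_two), eventually_gt_atTop 0] with x h1 h2 hx
  have g := ggaShape_pos ν σ ρ hx
  rw [lt_div_iff₀ (by positivity)] at h1
  rw [div_lt_iff₀ (by positivity)] at h2
  exact ⟨g, by linarith, by linarith⟩

lemma setLIntegral_le_tail {p g : ℝ → ℝ} {a x : ℝ} (ha : 0 < a)
    (h : ∀ y, x < y → a * g y ≤ p y) :
    ENNReal.ofReal a * ∫⁻ s in Set.Ioi x, ENNReal.ofReal (g s) ≤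
      (volume : Measure ℝ).withDensity (fun x => ENNReal.ofReal (p x)) (Set.Ioi x) := by
  rw [withDensity_apply _ measurableSet_Ioi, ← lintegral_const_mul' _ _ ENNReal.ofReal_ne_top]
  refine setLIntegral_mono' measurableSet_Ioi fun y hy => ?_
  rw [← ENNReal.ofReal_mul ha.le]
  exact ENNReal.ofReal_le_ofReal (h y hy)

lemma tail_pos {μ : Measure ℝ} [IsFiniteMeasure μ] {p : ℝ → ℝ}
    (hμ : μ = (volume : Measure ℝ).withDensity (fun x => ENNReal.ofReal (p x)))
    {c ν σ ρ : ℝ} (hc : 0 < c)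
    (hp : Tendsto (fun x => p x / (c * ggaShape ν σ ρ x)) atTop (nhds 1)) :
    ∀ᶠ x in atTop, 0 < μ.real (Set.Ioi x) := by
  obtain ⟨x₀, hx₀⟩ := eventually_atTop.1 (shape_tail_le hc hp)
  filter_upwards [eventually_ge_atTop x₀] with x hx
  have h := setLIntegral_le_tail (p := p) (x := x) (by positivity : 0 < c / 2)
    fun y hy => (hx₀ y (hx.trans hy.le)).2.1
  rw [← hμ] at h
  refine ENNReal.toReal_pos (ne_of_gt (lt_of_lt_of_le (ENNReal.mul_pos ?_ ?_) h))
    (measure_ne_top _ _)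
  · simpa using hc
  · refine ne_of_gt ((setLIntegral_pos_iff (by have := measurable_ggaShape ν σ ρ; fun_prop)).2 ?_)
    have : Function.support (fun s => ENNReal.ofReal (ggaShape ν σ ρ s)) ∩ Set.Ioi x =
        Set.Ioi x := by
      refine Set.inter_eq_right.2 fun y hy => ?_
      simpa using (hx₀ y (hx.trans (le_of_lt hy))).1
    rw [this]
    simp

/-- Once `h` is large, a large sum with both summands above `h` is negligible compared with the
tail of the law with the heavier density. -/
lemma joint_tail_le {μ η : Measure ℝ} [IsProbabilityMeasure μ] [IsProbabilityMeasure η]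
    {p q : ℝ → ℝ}
    (hμ : μ = (volume : Measure ℝ).withDensity (fun x => ENNReal.ofReal (p x)))
    (hη : η = (volume : Measure ℝ).withDensity (fun x => ENNReal.ofReal (q x)))
    {c C ν σ ρ : ℝ} (hc : 0 < c) (hC : 0 ≤ C) (hσ : 0 < σ) (hρ : 0 < ρ) (hρ' : ρ < 1)
    (hp : Tendsto (fun x => p x / (c * ggaShape ν σ ρ x)) atTop (nhds 1))
    (hq : ∀ᶠ x in atTop, q x ≤ C * ggaShape ν σ ρ x) {ε : ℝ} (hε : 0 < ε) :
    ∃ h : ℝ, 0 < h ∧ ∀ᶠ x in atTop,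
      (μ.prod η).real {z | h < z.1 ∧ h < z.2 ∧ x < z.1 + z.2} ≤ ε * μ.real (Set.Ioi x) := by
  obtain ⟨h₀, hh₀, hmul⟩ := exists_ggaShape_mul_le ν hσ hρ hρ'
  obtain ⟨x₀, hx₀⟩ := eventually_atTop.1 ((shape_tail_le hc hp).and hq)
  set D : ℝ := 2 * (2 * c * C * 2 ^ |ν|) with hD
  have hDn : 0 ≤ D := by positivity
  -- The last entry makes the factor `D / h` at most `ε * (c / 2)`; the `c / 2` is lost when the tail of
  -- the profile is replaced by the tail of `μ`.
  set h := max (max h₀ x₀) (D / (ε * (c / 2))) with hh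
  have hh0 : h₀ ≤ h := (le_max_left _ _).trans (le_max_left _ _)
  have hhx : x₀ ≤ h := (le_max_right _ _).trans (le_max_left _ _)
  have hpos : 0 < h := hh₀.trans_le hh0
  refine ⟨h, hpos, ?_⟩
  have hDh : D / h ≤ ε * (c / 2) := by
    rw [div_le_comm₀ hpos (by positivity)]
    exact le_max_right _ _
  filter_upwards [eventually_ge_atTop x₀] with x hx
  have h1 := prod_le_of_density_le (μ := μ) (η := η) (measurable_ggaShape ν σ ρ)
    (A := 2 * c) (B := C) (K := 2 ^ |ν|) (h := h) (x := x) (by positivity) hC (by positivity) hpos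
    (fun u hu => (ggaShape_pos ν σ ρ (hpos.trans hu)).le)
    (by rw [hμ]; exact restrict_le_of_eventually_le fun y hy => (hx₀ y (hhx.trans hy.le)).1.2.2)
    (by rw [hη]; exact restrict_le_of_eventually_le fun y hy => (hx₀ y (hhx.trans hy.le)).2)
    (fun u v hu hv => hmul u v (hh0.trans hu.le) (hh0.trans hv.le))
  have h2 := setLIntegral_le_tail (p := p) (x := x) (by positivity : 0 < c / 2)
    fun y hy => (hx₀ y (hx.trans hy.le)).1.2.1
  rw [← hμ] at h2
  have h3 : μ.prod η {z | h < z.1 ∧ h < z.2 ∧ x < z.1 + z.2} ≤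
      ENNReal.ofReal ε * μ (Set.Ioi x) := by
    refine h1.trans ?_
    calc _ ≤ ENNReal.ofReal (ε * (c / 2)) *
          ∫⁻ s in Set.Ioi x, ENNReal.ofReal (ggaShape ν σ ρ s) := by gcongr
      _ ≤ _ := by
        rw [ENNReal.ofReal_mul hε.le, mul_assoc]
        gcongr
  have := ENNReal.toReal_mono (by finiteness) h3
  rwa [ENNReal.toReal_mul, ENNReal.toReal_ofReal hε.le] at this

lemma tail_real_sub_le {μ : Measure ℝ} [IsProbabilityMeasure μ] {p : ℝ → ℝ}
    (hμ : μ = (volume : Measure ℝ).withDensity (fun x => ENNReal.ofReal (p x)))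
    {c ν σ ρ : ℝ} (hc : 0 < c) (hρ : 0 < ρ) (hρ' : ρ < 1)
    (hp : Tendsto (fun x => p x / (c * ggaShape ν σ ρ x)) atTop (nhds 1))
    {h ε : ℝ} (hh : 0 ≤ h) (hε : 0 < ε) :
    ∀ᶠ x in atTop, μ.real (Set.Ioi (x - h)) ≤ (1 + ε) * μ.real (Set.Ioi x) := by
  filter_upwards [tail_sub_le hμ hc hρ hρ' hp hh hε] with x hx
  have := ENNReal.toReal_mono (by finiteness) hx
  rwa [ENNReal.toReal_mul, ENNReal.toReal_ofReal (by linarith)] at this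

/-! ### Tail of the sum -/

/-- The asymptotics when the profile of `X` eventually dominates the one of `Y`. -/
lemma gga_aux
    {Ω : Type*} [MeasureSpace Ω] [IsProbabilityMeasure (ℙ : Measure Ω)]
    (X Y : Ω → ℝ) (hXm : Measurable X) (hYm : Measurable Y)
    (hindep : ProbabilityTheory.IndepFun X Y ℙ)
    (hXnn : ∀ ω, 0 ≤ X ω) (hYnn : ∀ ω, 0 ≤ Y ω)
    (p q : ℝ → ℝ)
    (hpX : Measure.map X (ℙ : Measure Ω)
      = (volume : Measure ℝ).withDensity (fun x => ENNReal.ofReal (p x)))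
    (hqY : Measure.map Y (ℙ : Measure Ω)
      = (volume : Measure ℝ).withDensity (fun x => ENNReal.ofReal (q x)))
    (ρ₁ ρ₂ c₁ c₂ σ₁ σ₂ ν₁ ν₂ : ℝ)
    (hρ₁ : 0 < ρ₁) (hρ₁' : ρ₁ < 1) (hρ₂ : 0 < ρ₂) (hρ₂' : ρ₂ < 1)
    (hc₁ : 0 < c₁) (hc₂ : 0 < c₂) (hσ₁ : 0 < σ₁)
    (hp : Tendsto (fun x => p x / (c₁ * ggaShape ν₁ σ₁ ρ₁ x)) atTop (nhds 1))
    (hq : Tendsto (fun x => q x / (c₂ * ggaShape ν₂ σ₂ ρ₂ x)) atTop (nhds 1))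
    (hdom : ∀ᶠ x in atTop, ggaShape ν₂ σ₂ ρ₂ x ≤ ggaShape ν₁ σ₁ ρ₁ x) :
    Tendsto
      (fun x => (ℙ {ω | x < X ω + Y ω}).toReal /
        ((ℙ {ω | x < X ω}).toReal + (ℙ {ω | x < Y ω}).toReal))
      atTop (nhds 1) := by
  set μ := Measure.map X (ℙ : Measure Ω) with hμ
  set η := Measure.map Y (ℙ : Measure Ω) with hη
  have : IsProbabilityMeasure μ := Measure.isProbabilityMeasure_map hXm.aemeasurable
  have : IsProbabilityMeasure η := Measure.isProbabilityMeasure_map hYm.aemeasurable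
  have hprod : Measure.map (fun ω => (X ω, Y ω)) ℙ = μ.prod η :=
    (ProbabilityTheory.indepFun_iff_map_prod_eq_prod_map_map hXm.aemeasurable
      hYm.aemeasurable).1 hindep
  have eX : ∀ x, (ℙ {ω | x < X ω}).toReal = μ.real (Set.Ioi x) := fun x => by
    rw [Measure.real, hμ, Measure.map_apply hXm measurableSet_Ioi]; rfl
  have eY : ∀ x, (ℙ {ω | x < Y ω}).toReal = η.real (Set.Ioi x) := fun x => by
    rw [Measure.real, hη, Measure.map_apply hYm measurableSet_Ioi]; rfl
  have hS : ∀ h x : ℝ, MeasurableSet {z : ℝ × ℝ | h < z.1 ∧ h < z.2 ∧ x < z.1 + z.2} :=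
    fun h x => (measurableSet_lt measurable_const measurable_fst).inter
      ((measurableSet_lt measurable_const measurable_snd).inter
        (measurableSet_lt measurable_const (measurable_fst.add measurable_snd)))
  -- If the sum exceeds `x`, either one summand is at most `h`, so that the other exceeds `x - h`, or both
  -- summands exceed `h`.
  have upper : ∀ h x, (ℙ {ω | x < X ω + Y ω}).toReal ≤ μ.real (Set.Ioi (x - h)) +
      η.real (Set.Ioi (x - h)) +
      (μ.prod η).real {z | h < z.1 ∧ h < z.2 ∧ x < z.1 + z.2} := by
    intro h x
    have e : (μ.prod η).real {z | h < z.1 ∧ h < z.2 ∧ x < z.1 + z.2} =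
        (ℙ : Measure Ω).real {ω | h < X ω ∧ h < Y ω ∧ x < X ω + Y ω} := by
      rw [← hprod, Measure.real, Measure.map_apply (hXm.prodMk hYm) (hS h x)]; rfl
    rw [e, ← eX, ← eY]
    change (ℙ : Measure Ω).real _ ≤ (ℙ : Measure Ω).real _ + (ℙ : Measure Ω).real _ + _
    have hsub : {ω | x < X ω + Y ω} ⊆ ({ω | x - h < X ω} ∪ {ω | x - h < Y ω}) ∪
        {ω | h < X ω ∧ h < Y ω ∧ x < X ω + Y ω} := by
      intro ω hω
      have hω' : x < X ω + Y ω := hω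
      by_cases h1 : X ω ≤ h
      · exact Or.inl (Or.inr (show x - h < Y ω by linarith))
      by_cases h2 : Y ω ≤ h
      · exact Or.inl (Or.inl (show x - h < X ω by linarith))
      exact Or.inr ⟨not_le.1 h1, not_le.1 h2, hω'⟩
    refine (measureReal_mono hsub).trans ((measureReal_union_le _ _).trans ?_)
    gcongr
    exact measureReal_union_le _ _
  -- Inclusion-exclusion for `{X > x} ∪ {Y > x} ⊆ {X + Y > x}`; nonnegativity enters here.
  have lower : ∀ x, μ.real (Set.Ioi x) + η.real (Set.Ioi x) -
      μ.real (Set.Ioi x) * η.real (Set.Ioi x) ≤ (ℙ {ω | x < X ω + Y ω}).toReal := by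
    intro x
    have hm : MeasurableSet {ω | x < Y ω} := hYm measurableSet_Ioi
    have h1 := measureReal_union_add_inter (μ := (ℙ : Measure Ω)) (s := {ω | x < X ω}) hm
    have h2 : (ℙ : Measure Ω).real ({ω | x < X ω} ∩ {ω | x < Y ω}) =
        μ.real (Set.Ioi x) * η.real (Set.Ioi x) := by
      rw [← eX, ← eY, ← ENNReal.toReal_mul]
      exact congrArg ENNReal.toReal
        (hindep.measure_inter_preimage_eq_mul _ _ measurableSet_Ioi measurableSet_Ioi)
    have h3 : (ℙ : Measure Ω).real ({ω | x < X ω} ∪ {ω | x < Y ω}) ≤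
        (ℙ : Measure Ω).real {ω | x < X ω + Y ω} := by
      refine measureReal_mono ?_
      rintro ω (hω | hω)
      · exact lt_of_lt_of_le hω (le_add_of_nonneg_right (hYnn ω))
      · exact lt_of_lt_of_le hω (le_add_of_nonneg_left (hXnn ω))
    rw [← eX x, ← eY x] at *
    simp only [Measure.real] at *
    linarith
  have hηdom : ∀ᶠ x in atTop, q x ≤ 2 * c₂ * ggaShape ν₁ σ₁ ρ₁ x := by
    filter_upwards [shape_tail_le hc₂ hq, hdom] with x h1 h2
    exact h1.2.2.trans (by gcongr)
  have hF0 : Tendsto (fun x => μ.real (Set.Ioi x)) atTop (nhds 0) := by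
    have h := (ProbabilityTheory.tendsto_cdf_atTop μ).const_sub 1
    rw [sub_self] at h
    refine h.congr fun x => ?_
    rw [ProbabilityTheory.cdf_eq_real, ← probReal_compl_eq_one_sub measurableSet_Iic,
      Set.compl_Iic]
  rw [Metric.tendsto_nhds]
  intro ε hε
  obtain ⟨h, hh, hmid⟩ := joint_tail_le hpX hqY hc₁ (by positivity : 0 ≤ 2 * c₂) hσ₁ hρ₁ hρ₁' hp
    hηdom (by positivity : 0 < ε / 3)
  filter_upwards [hmid, tail_real_sub_le hpX hc₁ hρ₁ hρ₁' hp hh.le (by positivity : 0 < ε / 3),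
    tail_real_sub_le hqY hc₂ hρ₂ hρ₂' hq hh.le (by positivity : 0 < ε / 3),
    tail_pos hpX hc₁ hp, hF0.eventually (gt_mem_nhds (by positivity : 0 < ε / 3))]
    with x h1 h2 h3 h4 h5
  have h6 := upper h x
  have h7 := lower x
  rw [eX, eY]
  have hG : 0 ≤ η.real (Set.Ioi x) := measureReal_nonneg
  have hpos : 0 < μ.real (Set.Ioi x) + η.real (Set.Ioi x) := by linarith
  rw [Real.dist_eq, div_sub_one hpos.ne', abs_div, abs_of_pos hpos, div_lt_iff₀ hpos, abs_lt]
  constructor <;> nlinarith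

/-- For independent nonnegative random variables with generalized Gamma
(Weibull-type, 0 < ρ < 1, hence subexponential) densities, the tail of the sum satisfies
`P(X + Y > x) ~ P(X > x) + P(Y > x)` as `x → ∞`. -/
theorem gga_addition_subexponential
    {Ω : Type*} [MeasureSpace Ω] [IsProbabilityMeasure (ℙ : Measure Ω)]
    (X Y : Ω → ℝ) (hXm : Measurable X) (hYm : Measurable Y)
    (hindep : ProbabilityTheory.IndepFun X Y ℙ)
    (hXnn : ∀ ω, 0 ≤ X ω) (hYnn : ∀ ω, 0 ≤ Y ω)
    (p q : ℝ → ℝ)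
    (hpX : Measure.map X (ℙ : Measure Ω)
      = (volume : Measure ℝ).withDensity (fun x => ENNReal.ofReal (p x)))
    (hqY : Measure.map Y (ℙ : Measure Ω)
      = (volume : Measure ℝ).withDensity (fun x => ENNReal.ofReal (q x)))
    (ρ₁ ρ₂ c₁ c₂ σ₁ σ₂ ν₁ ν₂ : ℝ)
    (hρ₁ : 0 < ρ₁) (hρ₁' : ρ₁ < 1) (hρ₂ : 0 < ρ₂) (hρ₂' : ρ₂ < 1)
    (hc₁ : 0 < c₁) (hc₂ : 0 < c₂) (hσ₁ : 0 < σ₁) (hσ₂ : 0 < σ₂)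
    (hp : Tendsto (fun x => p x / (c₁ * x ^ ν₁ * exp (-σ₁ * x ^ ρ₁))) atTop (nhds 1))
    (hq : Tendsto (fun x => q x / (c₂ * x ^ ν₂ * exp (-σ₂ * x ^ ρ₂))) atTop (nhds 1)) :
    Tendsto
      (fun x => (ℙ {ω | x < X ω + Y ω}).toReal /
        ((ℙ {ω | x < X ω}).toReal + (ℙ {ω | x < Y ω}).toReal))
      atTop (nhds 1) := by
  have e : ∀ c ν σ ρ x : ℝ, c * x ^ ν * exp (-σ * x ^ ρ) = c * ggaShape ν σ ρ x :=
    fun c ν σ ρ x => mul_assoc _ _ _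
  simp only [e] at hp hq
  by_cases h : ρ₁ < ρ₂ ∨ (ρ₁ = ρ₂ ∧ (σ₁ < σ₂ ∨ (σ₁ = σ₂ ∧ ν₂ ≤ ν₁)))
  · exact gga_aux X Y hXm hYm hindep hXnn hYnn p q hpX hqY ρ₁ ρ₂ c₁ c₂ σ₁ σ₂ ν₁ ν₂ hρ₁ hρ₁' hρ₂ hρ₂'
      hc₁ hc₂ hσ₁ hp hq (ggaShape_dominated ν₁ ν₂ hρ₂ hσ₂ h)
  · have h' : ρ₂ < ρ₁ ∨ (ρ₂ = ρ₁ ∧ (σ₂ < σ₁ ∨ (σ₂ = σ₁ ∧ ν₁ ≤ ν₂))) := by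
      grind
    have := gga_aux Y X hYm hXm hindep.symm hYnn hXnn q p hqY hpX ρ₂ ρ₁ c₂ c₁ σ₂ σ₁ ν₂ ν₁ hρ₂ hρ₂'
      hρ₁ hρ₁' hc₂ hc₁ hσ₂ hq hp (ggaShape_dominated ν₂ ν₁ hρ₁ hσ₁ h')
    simpa only [add_comm] using this
end

section
/- Let λ > 0 and let X₁, X₂ be independent random variables, each exponentially distributed with rate λ (density λ e^{−λx} on (0,∞)). Then the density of the product X₁X₂, given by p(z) = λ² ∫₀^∞ x^{−1} e^{−λx − λz/x} dx for z > 0, satisfies p(z) ~ √π λ^{3/2} z^{−1/4} e^{−2λ√z} as z → ∞. -/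
/-!
The substitution `x = √z · exp (b v)` with `b = (l √z)^(-1/2)` turns the integral into
`b · exp (-2 l √z) · ∫ exp (-(2 sinh (b v / 2) / b)²) dv` (a form of the integral representation of
the Bessel function `K₀`), and the factors in front of the last integral are exactly those of the
claimed asymptotics, up to `√π`. As `z → ∞` we have `b → 0⁺`, the integrand tends to `exp (-v²)` and
is dominated by it because `|sinh y| ≥ |y|`; so dominated convergence gives the Gaussian integral
`√π`.
-/

open MeasureTheory Filter Real
open scoped ProbabilityTheory

theorem abs_le_abs_two_mul_sinh_div {b : ℝ} (hb : 0 < b) (v : ℝ) :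
    |v| ≤ |2 * sinh (b * v / 2) / b| := by
  have h : |b * v / 2| ≤ |sinh (b * v / 2)| := by
    rw [abs_sinh]
    exact self_le_sinh_iff.2 (abs_nonneg _)
  rw [abs_div, abs_mul, abs_of_pos hb, le_div_iff₀ hb, abs_two]
  rw [abs_div, abs_mul, abs_of_pos hb, abs_two] at h
  linarith

theorem tendsto_two_mul_sinh_div (v : ℝ) :
    Tendsto (fun b : ℝ => 2 * sinh (b * v / 2) / b) (nhdsWithin 0 (Set.Ioi 0)) (nhds v) := by
  have hlin : HasDerivAt (fun b : ℝ => b * v / 2) (v / 2) 0 := by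
    simpa using ((hasDerivAt_id (0 : ℝ)).mul_const v).div_const 2
  have h : HasDerivAt (fun b : ℝ => 2 * sinh (b * v / 2)) v 0 := by
    have := (hlin.sinh).const_mul 2
    simp only [zero_mul, zero_div, cosh_zero, one_mul] at this
    exact this.congr_deriv (by ring)
  have h2 := h.tendsto_slope_zero_right
  refine h2.congr fun b => ?_
  simp [div_eq_inv_mul]

/-- The rescaled integral tends to the Gaussian integral, by dominated convergence with the
limit function itself as dominating function. -/
theorem tendsto_integral_exp_neg_sinh_sq :
    Tendsto (fun b : ℝ => ∫ v : ℝ, exp (-(2 * sinh (b * v / 2) / b) ^ 2))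
      (nhdsWithin 0 (Set.Ioi 0)) (nhds (sqrt π)) := by
  have hG : ∫ v : ℝ, exp (-v ^ 2) = sqrt π := by
    simpa using integral_gaussian 1
  rw [← hG]
  refine tendsto_integral_filter_of_dominated_convergence (fun v => exp (-v ^ 2)) ?_ ?_ ?_ ?_
  · refine Eventually.of_forall fun b => Continuous.aestronglyMeasurable ?_
    have : Continuous fun v : ℝ => sinh (b * v / 2) := continuous_sinh.comp (by fun_prop)
    fun_prop
  · filter_upwards [self_mem_nhdsWithin] with b hb
    refine Eventually.of_forall fun v => ?_
    rw [norm_of_nonneg (exp_pos _).le]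
    exact exp_le_exp.2 (neg_le_neg (sq_le_sq.2 (abs_le_abs_two_mul_sinh_div hb v)))
  · simpa using integrable_exp_neg_mul_sq one_pos
  · exact Eventually.of_forall fun v =>
      (continuous_exp.tendsto _).comp (((tendsto_two_mul_sinh_div v).pow 2).neg)

/-- The change of variables `x = c · exp (b v)`, with `c = √z` and `b² l c = 1`. -/
theorem integral_inv_mul_exp_eq {l c b : ℝ} (hc : 0 < c) (hb : 0 < b)
    (h : b ^ 2 * (l * c) = 1) :
    ∫ x in Set.Ioi (0 : ℝ), x⁻¹ * exp (-l * x - l * c ^ 2 / x)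
      = b * exp (-2 * l * c) * ∫ v : ℝ, exp (-(2 * sinh (b * v / 2) / b) ^ 2) := by
  have himg : (fun v : ℝ => c * exp (b * v)) '' Set.univ = Set.Ioi 0 := by
    ext x
    simp only [Set.image_univ, Set.mem_range, Set.mem_Ioi]
    constructor
    · rintro ⟨v, rfl⟩
      positivity
    · intro hx
      refine ⟨log (x / c) / b, ?_⟩
      rw [mul_div_cancel₀ _ hb.ne', exp_log (by positivity), mul_div_cancel₀ _ hc.ne']
  have hderiv : ∀ v ∈ Set.univ, HasDerivWithinAt (fun v : ℝ => c * exp (b * v))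
      (c * (exp (b * v) * b)) Set.univ v := by
    intro v _
    have := (((hasDerivAt_id v).const_mul b).exp).const_mul c
    exact (this.congr_deriv (by simp)).hasDerivWithinAt
  have hinj : Set.InjOn (fun v : ℝ => c * exp (b * v)) Set.univ := by
    intro v _ w _ hvw
    exact mul_left_cancel₀ hb.ne' (exp_injective (mul_left_cancel₀ hc.ne' hvw))
  rw [← himg, integral_image_eq_integral_abs_deriv_smul MeasurableSet.univ hderiv hinj,
    setIntegral_univ, ← integral_const_mul]
  congr 1 with v
  have hE : 0 < exp (b * v / 2) := exp_pos _
  have hE2 : exp (b * v) = exp (b * v / 2) ^ 2 := by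
    rw [← exp_nat_mul]
    congr 1
    push_cast
    ring
  have hexp : -l * (c * exp (b * v)) - l * c ^ 2 / (c * exp (b * v))
      = -2 * l * c + -(2 * sinh (b * v / 2) / b) ^ 2 := by
    have hlc : l * c = 1 / b ^ 2 := by
      field_simp
      linarith
    have hl : l = 1 / (b ^ 2 * c) := by
      field_simp
      linarith
    rw [hE2, sinh_eq, exp_neg, hl]
    field_simp
    ring
  rw [hexp, exp_add, abs_of_pos (by positivity), smul_eq_mul]
  have := exp_pos (b * v)
  field_simp


/-- The density of the product of two independent Exp(λ) random variables,
`p(z) = λ² ∫₀^∞ x⁻¹ e^{−λx − λz/x} dx`, satisfies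
`p(z) ~ √π λ^{3/2} z^{−1/4} e^{−2λ√z}` as `z → ∞`. -/
theorem product_exponentials_tail
    {Ω : Type*} [MeasureSpace Ω] [IsProbabilityMeasure (ℙ : Measure Ω)]
    (l : ℝ) (hl : 0 < l)
    (X₁ X₂ : Ω → ℝ) (hX₁m : Measurable X₁) (hX₂m : Measurable X₂)
    (hindep : ProbabilityTheory.IndepFun X₁ X₂ ℙ)
    (hX₁ : Measure.map X₁ (ℙ : Measure Ω)
      = (volume : Measure ℝ).withDensity
          (fun x => ENNReal.ofReal (if 0 < x then l * exp (-l * x) else 0)))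
    (hX₂ : Measure.map X₂ (ℙ : Measure Ω)
      = (volume : Measure ℝ).withDensity
          (fun x => ENNReal.ofReal (if 0 < x then l * exp (-l * x) else 0)))
    (p : ℝ → ℝ)
    (hp : ∀ z > 0, p z = l ^ 2 * ∫ x in Set.Ioi (0 : ℝ), x⁻¹ * exp (-l * x - l * z / x)) :
    Tendsto
      (fun z => p z /
        (Real.sqrt π * l ^ ((3 : ℝ) / 2) * z ^ (-(1 : ℝ) / 4) * exp (-2 * l * Real.sqrt z)))
      atTop (nhds 1) := by
  have hbt : Tendsto (fun z : ℝ => (sqrt (l * sqrt z))⁻¹) atTop (nhdsWithin 0 (Set.Ioi 0)) :=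
    tendsto_inv_atTop_nhdsGT_zero.comp
      (tendsto_sqrt_atTop.comp (tendsto_sqrt_atTop.const_mul_atTop hl))
  have hlim := (tendsto_integral_exp_neg_sinh_sq.comp hbt).div_const (sqrt π)
  rw [div_self (by positivity)] at hlim
  refine hlim.congr' ?_
  filter_upwards [eventually_gt_atTop 0] with z hz
  have hc : 0 < sqrt z := sqrt_pos.2 hz
  have hb : 0 < (sqrt (l * sqrt z))⁻¹ := by positivity
  have hbsq : (sqrt (l * sqrt z))⁻¹ ^ 2 * (l * sqrt z) = 1 := by
    rw [inv_pow, sq_sqrt (by positivity), inv_mul_cancel₀ (by positivity)]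
  have hI := integral_inv_mul_exp_eq hc hb hbsq
  rw [sq_sqrt hz.le] at hI
  have hpow : l ^ 2 * (sqrt (l * sqrt z))⁻¹ = l ^ ((3 : ℝ) / 2) * z ^ (-(1 : ℝ) / 4) := by
    rw [sqrt_eq_rpow, sqrt_eq_rpow, mul_rpow hl.le (by positivity), ← rpow_mul hz.le, mul_inv,
      ← rpow_neg hl.le, ← rpow_neg hz.le, ← mul_assoc, ← rpow_natCast l 2, ← rpow_add hl]
    norm_num
  have hl3 : 0 < l ^ ((3 : ℝ) / 2) := rpow_pos_of_pos hl _
  have hz4 : 0 < z ^ (-(1 : ℝ) / 4) := rpow_pos_of_pos hz _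
  have hπ : 0 < sqrt π := sqrt_pos.2 pi_pos
  have he := exp_pos (-2 * l * sqrt z)
  rw [hp z hz, hI, ← mul_assoc, ← mul_assoc, hpow, Function.comp_apply,
    div_eq_div_iff hπ.ne' (by positivity)]
  ring
end

section
/- Let Z₁, Z₂ be independent standard normal random variables. Then the density of the product Z₁Z₂, given for z ≠ 0 by p(z) = (1/π) ∫₀^∞ x^{−1} exp(−x²/2 − z²/(2x²)) dx, satisfies p(z) ~ (2π z)^{−1/2} e^{−z} as z → ∞. -/
/-!
The substitution `x = s * exp (v / (2 * s))` with `s = √z` turns `dx / x` into `dv / (2 * s)`, and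
since `x² / 2 + z² / (2 x²) = z + (x - z / x)² / 2` with `x - z / x = 2 s sinh (v / (2 s))`, it gives
`∫₀^∞ x⁻¹ exp (-x² / 2 - z² / (2 x²)) dx = (2 s)⁻¹ e^{-z} ∫ exp (-2 (s sinh (v / (2 s)))²) dv`
(`integral_eq_sinh`). As `s → ∞` the integrand tends to `exp (-v² / 2)`, because `sinh` has
derivative `1` at `0`, and it is dominated by that same limit, because `|t| ≤ |sinh t|`. Dominated
convergence (`tendsto_integral_sinh`) gives the Gaussian integral `√(2π)`, hence the asymptotics.
-/

open MeasureTheory Filter Real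
open scoped ProbabilityTheory

lemma abs_le_abs_sinh (t : ℝ) : |t| ≤ |sinh t| := by
  rw [abs_sinh]
  exact self_le_sinh_iff.2 (abs_nonneg t)

/-- The logarithmic substitution `x = s * exp (v / (2 * s))`, centred at the saddle point `x = s`
and scaled to the width of the peak. -/
lemma integral_eq_sinh {s : ℝ} (hs : 0 < s) :
    ∫ x in Set.Ioi (0 : ℝ), x⁻¹ * exp (-x ^ 2 / 2 - (s ^ 2) ^ 2 / (2 * x ^ 2))
      = (2 * s)⁻¹ * exp (-s ^ 2) * ∫ v : ℝ, exp (-2 * (s * sinh (v / (2 * s))) ^ 2) := by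
  have himg : (fun v : ℝ => s * exp (v / (2 * s))) '' Set.univ = Set.Ioi 0 := by
    ext x
    simp only [Set.image_univ, Set.mem_range, Set.mem_Ioi]
    constructor
    · rintro ⟨v, rfl⟩
      positivity
    · intro hx
      refine ⟨2 * s * log (x / s), ?_⟩
      rw [mul_div_cancel_left₀ _ (by positivity), exp_log (by positivity)]
      field_simp
  have hderiv : ∀ v ∈ (Set.univ : Set ℝ), HasDerivWithinAt (fun v : ℝ => s * exp (v / (2 * s)))
      (s * (exp (v / (2 * s)) * (1 / (2 * s)))) Set.univ v := fun v _ =>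
    ((((hasDerivAt_id v).div_const (2 * s)).exp).const_mul s).hasDerivWithinAt
  have hinj : Set.InjOn (fun v : ℝ => s * exp (v / (2 * s))) Set.univ := by
    intro a _ b _ h
    have h1 := exp_injective (mul_left_cancel₀ hs.ne' h)
    field_simp at h1
    exact h1
  rw [← himg, integral_image_eq_integral_abs_deriv_smul MeasurableSet.univ hderiv hinj,
    setIntegral_univ, ← integral_const_mul]
  congr 1
  ext v
  rw [abs_of_pos (by positivity), smul_eq_mul, sinh_eq, exp_neg (v / (2 * s)), mul_assoc (2 * s)⁻¹, ← exp_add]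
  set E := exp (v / (2 * s))
  have hE : 0 < E := exp_pos _
  have hexp : -(s * E) ^ 2 / 2 - (s ^ 2) ^ 2 / (2 * (s * E) ^ 2)
      = -s ^ 2 + -2 * (s * ((E - E⁻¹) / 2)) ^ 2 := by
    field_simp
    ring
  rw [hexp]
  field_simp

lemma tendsto_mul_sinh (v : ℝ) :
    Tendsto (fun s : ℝ => s * sinh (v / (2 * s))) atTop (nhds (v / 2)) := by
  have h : HasDerivAt (fun t : ℝ => sinh (v / 2 * t)) (v / 2) 0 := by
    simpa using ((hasDerivAt_id (0 : ℝ)).const_mul (v / 2)).sinh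
  have h2 := h.tendsto_slope_zero_right.comp tendsto_inv_atTop_nhdsGT_zero
  refine h2.congr fun s => ?_
  simp only [Function.comp_apply, inv_inv, zero_add, mul_zero, sinh_zero, sub_zero, smul_eq_mul]
  congr 2
  rw [← div_eq_mul_inv, div_div]

lemma tendsto_integral_sinh :
    Tendsto (fun s : ℝ => ∫ v : ℝ, exp (-2 * (s * sinh (v / (2 * s))) ^ 2)) atTop
      (nhds √(2 * π)) := by
  have hG : ∫ v : ℝ, exp (-(1 / 2) * v ^ 2) = √(2 * π) := by
    rw [integral_gaussian]
    congr 1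
    ring
  rw [← hG]
  refine tendsto_integral_filter_of_dominated_convergence (fun v => exp (-(1 / 2) * v ^ 2))
    (Eventually.of_forall fun s => ?_) ?_ (integrable_exp_neg_mul_sq (by norm_num)) ?_
  · exact (by fun_prop : Continuous fun v : ℝ =>
      exp (-2 * (s * sinh (v / (2 * s))) ^ 2)).aestronglyMeasurable
  · filter_upwards [eventually_gt_atTop 0] with s hs
    refine Eventually.of_forall fun v => ?_
    rw [norm_of_nonneg (exp_pos _).le, exp_le_exp]
    have h1 : (v / (2 * s)) ^ 2 ≤ sinh (v / (2 * s)) ^ 2 := sq_le_sq.2 (abs_le_abs_sinh _)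
    have h2 := mul_le_mul_of_nonneg_left h1 (sq_nonneg s)
    have h3 : s ^ 2 * (v / (2 * s)) ^ 2 = v ^ 2 / 4 := by
      field_simp
      norm_num
    rw [mul_pow]
    linarith
  · refine Eventually.of_forall fun v => ?_
    have h := (((tendsto_mul_sinh v).pow 2).const_mul (-2)).rexp
    convert h using 3
    ring

/-- The density of the product of two independent standard normal random
variables, `p(z) = (1/π) ∫₀^∞ x⁻¹ exp(−x²/2 − z²/(2x²)) dx` for `z ≠ 0`, satisfies
`p(z) ~ (2πz)^{−1/2} e^{−z}` as `z → ∞`. -/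
theorem product_gaussians_tail
    {Ω : Type*} [MeasureSpace Ω] [IsProbabilityMeasure (ℙ : Measure Ω)]
    (Z₁ Z₂ : Ω → ℝ) (hZ₁m : Measurable Z₁) (hZ₂m : Measurable Z₂)
    (hindep : ProbabilityTheory.IndepFun Z₁ Z₂ ℙ)
    (hZ₁ : Measure.map Z₁ (ℙ : Measure Ω)
      = (volume : Measure ℝ).withDensity
          (fun x => ENNReal.ofReal ((2 * π) ^ (-(1 : ℝ) / 2) * exp (-x ^ 2 / 2))))
    (hZ₂ : Measure.map Z₂ (ℙ : Measure Ω)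
      = (volume : Measure ℝ).withDensity
          (fun x => ENNReal.ofReal ((2 * π) ^ (-(1 : ℝ) / 2) * exp (-x ^ 2 / 2))))
    (p : ℝ → ℝ)
    (hp : ∀ z ≠ 0, p z
      = (1 / π) * ∫ x in Set.Ioi (0 : ℝ), x⁻¹ * exp (-x ^ 2 / 2 - z ^ 2 / (2 * x ^ 2))) :
    Tendsto (fun z => p z / ((2 * π * z) ^ (-(1 : ℝ) / 2) * exp (-z))) atTop (nhds 1) := by
  have hlim := ((tendsto_integral_sinh.comp tendsto_sqrt_atTop).const_mul (√(2 * π))⁻¹)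
  rw [inv_mul_cancel₀ (by positivity)] at hlim
  refine hlim.congr' ?_
  filter_upwards [eventually_gt_atTop 0] with z hz
  have hs : 0 < √z := sqrt_pos.2 hz
  have hzs : √z ^ 2 = z := sq_sqrt hz.le
  have key := integral_eq_sinh hs
  rw [hzs] at key
  have hpow : (2 * π * z) ^ (-(1 : ℝ) / 2) = (√(2 * π) * √z)⁻¹ := by
    rw [neg_div, rpow_neg (by positivity), ← sqrt_eq_rpow, sqrt_mul (by positivity)]
  rw [hp z hz.ne', key, hpow, Function.comp_apply]
  have hpi : √(2 * π) ^ 2 = 2 * π := sq_sqrt (by positivity)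
  field_simp
  rw [hpi]
end

section
/- Let ρ₁, ρ₂ > 0, c₁, c₂ > 0, σ₁, σ₂ > 0 and ν₁, ν₂ ∈ ℝ, and let X, Y be independent strictly positive random variables with densities p, q satisfying p(x) ~ c₁ x^{ν₁} e^{−σ₁ x^{ρ₁}} and q(x) ~ c₂ x^{ν₂} e^{−σ₂ x^{ρ₂}} as x → ∞. Let 0 < ε < 1 be such that a₊ = (1+ε)ρ₂/(ρ₁+ρ₂) and a₋ = 1 − (1+ε)ρ₁/(ρ₁+ρ₂) satisfy 0 < a₋ < a₊ < 1, and set ρ = ρ₁ρ₂/(ρ₁+ρ₂). Then for every ν ∈ ℝ and every σ > 0, P(XY > x and X ∉ [x^{a₋}, x^{a₊}]) = o(x^ν e^{−σ x^ρ}) as x → ∞. -/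
/-!
The exponents `aP` and `1 - aM` satisfy `aP * ρ₁ = (1 - aM) * ρ₂ = (1 + ε) * ρ`. If `x < X * Y` and
`X ∉ [x ^ aM, x ^ aP]`, then either `X > x ^ aP`, or `X < x ^ aM` and hence `Y > x ^ (1 - aM)`.
Each of these events concerns one variable only, and `gga_tail_bound` bounds its probability by
`exp (-(σᵢ / 2) * x ^ ((1 + ε) * ρ))`: half of the exponential rate of the density absorbs all
powers and leaves the integrable factor `u ^ (-2)`. Since `(1 + ε) * ρ > ρ`, this is negligible
against `x ^ ν * exp (-σ * x ^ ρ)` by `gga_stretched_ratio`, and a union bound finishes.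
-/

open MeasureTheory Filter Real
open scoped ProbabilityTheory

theorem gga_rpow_mul_exp (μ s β : ℝ) (hs : 0 < s) (hβ : 0 < β) :
    Tendsto (fun x : ℝ => x ^ μ * exp (-s * x ^ β)) atTop (nhds 0) := by
  have h := (tendsto_rpow_mul_exp_neg_mul_atTop_nhds_zero (μ / β) s hs).comp
    (tendsto_rpow_atTop hβ)
  refine h.congr' ?_
  filter_upwards [eventually_gt_atTop 0] with x hx
  simp only [Function.comp]
  rw [← rpow_mul hx.le, mul_div_cancel₀ _ hβ.ne']

theorem gga_stretched_ratio (ν σ s α β : ℝ) (hs : 0 < s) (hα : 0 < α) (hαβ : α < β) :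
    Tendsto (fun x : ℝ => exp (-s * x ^ β) / (x ^ ν * exp (-σ * x ^ α))) atTop (nhds 0) := by
  have h := gga_rpow_mul_exp (-ν) (s / 2) β (by positivity) (hα.trans hαβ)
  refine squeeze_zero' ?_ ?_ h
  · filter_upwards [eventually_gt_atTop 0] with x hx
    positivity
  · filter_upwards [eventually_gt_atTop 0,
      (tendsto_rpow_atTop (sub_pos.2 hαβ)).eventually_ge_atTop (2 * σ / s)] with x hx hb
    have hxα : 0 < x ^ α := rpow_pos_of_pos hx _
    have hle : σ * x ^ α ≤ s / 2 * x ^ β := by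
      have hsplit : x ^ β = x ^ (β - α) * x ^ α := by
        rw [← rpow_add hx]; congr 1; ring
      rw [div_le_iff₀ hs] at hb
      rw [hsplit]
      nlinarith
    rw [rpow_neg hx.le, div_mul_eq_div_div, div_right_comm, ← exp_sub, div_eq_inv_mul]
    gcongr
    linarith

/-- A density asymptotic to `c * x ^ ν * exp (-σ * x ^ r)` has tail at most
`exp (-(σ / 2) * t ^ r)` for all large `t`. -/
theorem gga_tail_bound {Ω : Type*} [MeasurableSpace Ω] (P : Measure Ω)
    (X : Ω → ℝ) (hXm : Measurable X) (p : ℝ → ℝ)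
    (hpX : Measure.map X P = (volume : Measure ℝ).withDensity (fun x => ENNReal.ofReal (p x)))
    (r c σ ν : ℝ) (hr : 0 < r) (hc : 0 < c) (hσ : 0 < σ)
    (hp : Tendsto (fun x => p x / (c * x ^ ν * exp (-σ * x ^ r))) atTop (nhds 1)) :
    ∀ᶠ t in atTop, (P {ω | t < X ω}).toReal ≤ exp (-(σ / 2) * t ^ r) := by
  -- Half of the exponential rate absorbs `2 * c * x ^ (ν + 2)`, leaving the integrable `x ^ (-2)`.
  have hbound : ∀ᶠ x in atTop, p x ≤ exp (-(σ / 2) * x ^ r) * x ^ (-2 : ℝ) := by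
    have h := (gga_rpow_mul_exp (ν + 2) (σ / 2) r (by positivity) hr).const_mul (2 * c)
    rw [mul_zero] at h
    filter_upwards [eventually_gt_atTop 0, hp.eventually_le_const one_lt_two,
      h.eventually_le_const one_pos] with x hx h2 h1
    rw [div_le_iff₀ (by positivity)] at h2
    refine h2.trans ?_
    have e1 : exp (-σ * x ^ r) = exp (-(σ / 2) * x ^ r) * exp (-(σ / 2) * x ^ r) := by
      rw [← exp_add]; congr 1; ring
    have e2 : x ^ ν = x ^ (ν + 2) * x ^ (-2 : ℝ) := by
      rw [← rpow_add hx]; congr 1; ring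
    have hnn : 0 ≤ exp (-(σ / 2) * x ^ r) * x ^ (-2 : ℝ) := by positivity
    rw [e1, e2]
    nlinarith [mul_le_mul_of_nonneg_right h1 hnn]
  obtain ⟨T, hT⟩ := eventually_atTop.1 hbound
  filter_upwards [eventually_ge_atTop T, eventually_ge_atTop 1] with t htT ht1
  have ht0 : 0 < t := by linarith
  have hP : P {ω | t < X ω} = ∫⁻ x in Set.Ioi t, ENNReal.ofReal (p x) := by
    rw [← withDensity_apply _ measurableSet_Ioi, ← hpX, Measure.map_apply hXm measurableSet_Ioi]
    rfl
  have hint : IntegrableOn (fun x : ℝ => exp (-(σ / 2) * t ^ r) * x ^ (-2 : ℝ)) (Set.Ioi t) :=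
    (integrableOn_Ioi_rpow_of_lt (by norm_num) ht0).const_mul _
  have hle : P {ω | t < X ω} ≤ ENNReal.ofReal (exp (-(σ / 2) * t ^ r)) := by
    rw [hP]
    calc ∫⁻ x in Set.Ioi t, ENNReal.ofReal (p x)
        ≤ ∫⁻ x in Set.Ioi t, ENNReal.ofReal (exp (-(σ / 2) * t ^ r) * x ^ (-2 : ℝ)) := by
          refine setLIntegral_mono' measurableSet_Ioi fun x hx => ENNReal.ofReal_le_ofReal ?_
          have hx' : t < x := hx
          have hx0 : 0 < x := ht0.trans hx'
          refine (hT x (htT.trans hx'.le)).trans ?_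
          have hpow : t ^ r ≤ x ^ r := rpow_le_rpow ht0.le hx'.le hr.le
          have hexp : exp (-(σ / 2) * x ^ r) ≤ exp (-(σ / 2) * t ^ r) :=
            exp_le_exp.2 (by nlinarith)
          gcongr
      _ = ENNReal.ofReal (∫ x in Set.Ioi t, exp (-(σ / 2) * t ^ r) * x ^ (-2 : ℝ)) := by
          rw [ofReal_integral_eq_lintegral_ofReal hint]
          filter_upwards [ae_restrict_mem measurableSet_Ioi] with x hx
          have hx0 : 0 < x := ht0.trans hx
          simp only [Pi.zero_apply]
          positivity
      _ ≤ ENNReal.ofReal (exp (-(σ / 2) * t ^ r)) := by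
          refine ENNReal.ofReal_le_ofReal ?_
          rw [integral_const_mul, integral_Ioi_rpow_of_lt (by norm_num) ht0]
          have e : -t ^ ((-2 : ℝ) + 1) / (-2 + 1) = t⁻¹ := by
            norm_num [rpow_neg_one]
          rw [e]
          exact mul_le_of_le_one_right (exp_pos _).le (inv_le_one_of_one_le₀ ht1)
  exact ENNReal.toReal_le_of_le_ofReal (exp_pos _).le hle

/-- Truncation estimate for the multiplication rule of the generalized Gamma
algebra: `P(XY > x, X ∉ [x^{aM}, x^{aP}]) = o(x^ν e^{−σ x^ρ})` for every `ν ∈ ℝ`, `σ > 0`,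
where `aP = (1+ε)ρ₂/(ρ₁+ρ₂)`, `aM = 1 − (1+ε)ρ₁/(ρ₁+ρ₂)` and `ρ = ρ₁ρ₂/(ρ₁+ρ₂)`. -/
theorem gga_multiplication_truncation
    {Ω : Type*} [MeasureSpace Ω] [IsProbabilityMeasure (ℙ : Measure Ω)]
    (X Y : Ω → ℝ) (hXm : Measurable X) (hYm : Measurable Y)
    (hindep : ProbabilityTheory.IndepFun X Y ℙ)
    (hXpos : ∀ ω, 0 < X ω) (hYpos : ∀ ω, 0 < Y ω)
    (p q : ℝ → ℝ)
    (hpX : Measure.map X (ℙ : Measure Ω)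
      = (volume : Measure ℝ).withDensity (fun x => ENNReal.ofReal (p x)))
    (hqY : Measure.map Y (ℙ : Measure Ω)
      = (volume : Measure ℝ).withDensity (fun x => ENNReal.ofReal (q x)))
    (ρ₁ ρ₂ c₁ c₂ σ₁ σ₂ ν₁ ν₂ : ℝ)
    (hρ₁ : 0 < ρ₁) (hρ₂ : 0 < ρ₂)
    (hc₁ : 0 < c₁) (hc₂ : 0 < c₂) (hσ₁ : 0 < σ₁) (hσ₂ : 0 < σ₂)
    (hp : Tendsto (fun x => p x / (c₁ * x ^ ν₁ * exp (-σ₁ * x ^ ρ₁))) atTop (nhds 1))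
    (hq : Tendsto (fun x => q x / (c₂ * x ^ ν₂ * exp (-σ₂ * x ^ ρ₂))) atTop (nhds 1))
    (ε aP aM ρ : ℝ) (hε : 0 < ε) (hε' : ε < 1)
    (haP : aP = (1 + ε) * ρ₂ / (ρ₁ + ρ₂)) (haM : aM = 1 - (1 + ε) * ρ₁ / (ρ₁ + ρ₂))
    (h₀ : 0 < aM) (h₁ : aM < aP) (h₂ : aP < 1)
    (hρ : ρ = ρ₁ * ρ₂ / (ρ₁ + ρ₂)) :
    ∀ (ν σ : ℝ), 0 < σ →
      Tendsto
        (fun x => (ℙ {ω | x < X ω * Y ω ∧ X ω ∉ Set.Icc (x ^ aM) (x ^ aP)}).toReal /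
          (x ^ ν * exp (-σ * x ^ ρ)))
        atTop (nhds 0) := by
  intro ν σ _
  have hsum : ρ₁ + ρ₂ ≠ 0 := by positivity
  have hρpos : 0 < ρ := by rw [hρ]; positivity
  have hlt : ρ < (1 + ε) * ρ := by nlinarith
  have hP : aP * ρ₁ = (1 + ε) * ρ := by rw [haP, hρ]; ring
  have hM : (1 - aM) * ρ₂ = (1 + ε) * ρ := by rw [haM, hρ]; ring
  have hX := (tendsto_rpow_atTop (h₀.trans h₁)).eventually
    (gga_tail_bound ℙ X hXm p hpX ρ₁ c₁ σ₁ ν₁ hρ₁ hc₁ hσ₁ hp)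
  have hY := (tendsto_rpow_atTop (sub_pos.2 (h₁.trans h₂))).eventually
    (gga_tail_bound ℙ Y hYm q hqY ρ₂ c₂ σ₂ ν₂ hρ₂ hc₂ hσ₂ hq)
  have hlim := (gga_stretched_ratio ν σ (σ₁ / 2) ρ _ (by positivity) hρpos hlt).add
    (gga_stretched_ratio ν σ (σ₂ / 2) ρ _ (by positivity) hρpos hlt)
  rw [add_zero] at hlim
  refine squeeze_zero' ?_ ?_ hlim
  · filter_upwards [eventually_gt_atTop 0] with x hx
    positivity
  · filter_upwards [eventually_gt_atTop 0, hX, hY] with x hx hx1 hx2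
    rw [← rpow_mul hx.le, hP] at hx1
    rw [← rpow_mul hx.le, hM] at hx2
    rw [← add_div]
    refine div_le_div_of_nonneg_right ((?_ : _ ≤ _).trans (add_le_add hx1 hx2)) (by positivity)
    have hsub : {ω | x < X ω * Y ω ∧ X ω ∉ Set.Icc (x ^ aM) (x ^ aP)} ⊆
        {ω | x ^ aP < X ω} ∪ {ω | x ^ (1 - aM) < Y ω} := by
      rintro ω ⟨hxy, hn⟩
      by_cases hc : x ^ aP < X ω
      · exact Or.inl hc
      · right
        have hXlt : X ω < x ^ aM := by
          by_contra hge
          exact hn ⟨not_lt.1 hge, not_lt.1 hc⟩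
        have hsplit : x = x ^ aM * x ^ (1 - aM) := by
          rw [← rpow_add hx, add_sub_cancel, rpow_one]
        have hlt' : x ^ aM * x ^ (1 - aM) < x ^ aM * Y ω :=
          hsplit ▸ hxy.trans (mul_lt_mul_of_pos_right hXlt (hYpos ω))
        exact lt_of_mul_lt_mul_left hlt' (by positivity)
    exact (measureReal_mono hsub).trans (measureReal_union_le _ _)
end
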